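/- arXiv:2409.02903 — 4 statements merged into one kernel-verified Lean document; each statement's English description precedes it below -/
import Mathlib

section
/- Let f : ℝ^d → ℝ be nonnegative, l ≥ 0, ε > 0, ζ ∈ (0,1), and set f_{l,ε} := (f−l)_+ + ε. Then for all v, w ∈ ℝ^d with f(v) > l and f(w) > l, [f(v) − f(w)] · [f_{l,ε}(v)^{−(1−ζ)} − f_{l,ε}(w)^{−(1−ζ)}] ≤ −(4(1−ζ)/ζ²) · (f_{l,ε}(v)^{ζ/2} − f_{l,ε}(w)^{ζ/2})². -/
/-!
With `0 < b ≤ a`, the claim is the Cauchy–Schwarz inequality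
`(∫ t^(ζ/2-1))² ≤ (∫ 1) (∫ t^(ζ-2))` over `[b, a]`, after evaluating the three integrals.
It is obtained here without integration: for each real `s` the function
`s² t - (4 s/ζ) t^(ζ/2) - t^(-(1-ζ))/(1-ζ)` has derivative `(s - t^(ζ/2-1))² ≥ 0`, so its increment
from `b` to `a`, a quadratic polynomial in `s`, is nonnegative, and hence its discriminant is
nonpositive.
-/

/-- A primitive of `(s - t^(ζ/2-1))²` is monotone on the positive half-line. -/
lemma monotoneOn_primitive (ζ s : ℝ) (h0 : 0 < ζ) (h1 : ζ < 1) :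
    MonotoneOn (fun t : ℝ => s ^ 2 * t - 4 * s / ζ * t ^ (ζ / 2) - t ^ (-(1 - ζ)) / (1 - ζ))
      (Set.Ioi 0) := by
  have hne : (1 - ζ) ≠ 0 := by linarith
  have hd : ∀ t ∈ Set.Ioi (0 : ℝ), HasDerivAt
      (fun t : ℝ => s ^ 2 * t - 4 * s / ζ * t ^ (ζ / 2) - t ^ (-(1 - ζ)) / (1 - ζ))
      ((s - t ^ (ζ / 2 - 1)) ^ 2) t := by
    intro t ht
    have ht' : t ≠ 0 := ne_of_gt ht
    have e1 := (Real.hasDerivAt_rpow_const (x := t) (p := ζ / 2) (Or.inl ht')).const_mul (4 * s / ζ)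
    have e2 := (Real.hasDerivAt_rpow_const (x := t) (p := -(1 - ζ)) (Or.inl ht')).div_const (1 - ζ)
    have e3 := (((hasDerivAt_id t).const_mul (s ^ 2)).sub e1).sub e2
    refine e3.congr_deriv ?_
    have hp : t ^ (-(1 - ζ) - 1) = t ^ (ζ / 2 - 1) * t ^ (ζ / 2 - 1) := by
      rw [← Real.rpow_add ht]
      congr 1
      ring
    rw [hp]
    field_simp
    ring
  refine monotoneOn_of_hasDerivWithinAt_nonneg (convex_Ioi 0)
    (fun t ht => (hd t ht).continuousAt.continuousWithinAt)
    (fun t ht => (hd t (interior_subset ht)).hasDerivWithinAt) (fun t _ => sq_nonneg _)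

lemma rpow_concavity_of_le (ζ a b : ℝ) (h0 : 0 < ζ) (h1 : ζ < 1) (hb : 0 < b) (hab : b ≤ a) :
    (a - b) * (a ^ (-(1 - ζ)) - b ^ (-(1 - ζ))) ≤
      -(4 * (1 - ζ) / ζ ^ 2) * (a ^ (ζ / 2) - b ^ (ζ / 2)) ^ 2 := by
  have hpos : 0 < 1 - ζ := by linarith
  have hdisc := discrim_le_zero (a := a - b) (b := -(4 / ζ * (a ^ (ζ / 2) - b ^ (ζ / 2))))
    (c := (b ^ (-(1 - ζ)) - a ^ (-(1 - ζ))) / (1 - ζ)) (fun s => by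
      have := monotoneOn_primitive ζ s h0 h1 hb (hb.trans_le hab) hab
      simp only at this
      linear_combination this)
  unfold discrim at hdisc
  have key := mul_le_mul_of_nonneg_left hdisc (div_pos hpos four_pos).le
  have e : (1 - ζ) / 4 * ((-(4 / ζ * (a ^ (ζ / 2) - b ^ (ζ / 2)))) ^ 2 -
      4 * (a - b) * ((b ^ (-(1 - ζ)) - a ^ (-(1 - ζ))) / (1 - ζ))) =
      4 * (1 - ζ) / ζ ^ 2 * (a ^ (ζ / 2) - b ^ (ζ / 2)) ^ 2 +
        (a - b) * (a ^ (-(1 - ζ)) - b ^ (-(1 - ζ))) := by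
    field_simp
    ring
  rw [e] at key
  linarith

/-- **Concavity estimate (Lemma 3.2.i).**
Let `f : ℝ^d → ℝ` be nonnegative, `l ≥ 0`, `ε > 0`, `ζ ∈ (0,1)` and set
`f_{l,ε} := (f − l)₊ + ε`.  Then for all `v w` with `f v > l` and `f w > l`,
`(f v − f w) (f_{l,ε}(v)^{−(1−ζ)} − f_{l,ε}(w)^{−(1−ζ)})
  ≤ −(4(1−ζ)/ζ²) (f_{l,ε}(v)^{ζ/2} − f_{l,ε}(w)^{ζ/2})²`. -/
theorem level_set_concavity_estimate
    (d : ℕ) (f : EuclideanSpace ℝ (Fin d) → ℝ) (hf : ∀ v, 0 ≤ f v)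
    (l ε ζ : ℝ) (hl : 0 ≤ l) (hε : 0 < ε) (hζ : ζ ∈ Set.Ioo (0 : ℝ) 1)
    (flε : EuclideanSpace ℝ (Fin d) → ℝ)
    (hflε : ∀ v, flε v = max (f v - l) 0 + ε)
    (v w : EuclideanSpace ℝ (Fin d)) (hv : l < f v) (hw : l < f w) :
    (f v - f w) * (flε v ^ (-(1 - ζ)) - flε w ^ (-(1 - ζ))) ≤
      -(4 * (1 - ζ) / ζ ^ 2) * (flε v ^ (ζ / 2) - flε w ^ (ζ / 2)) ^ 2 := by
  have hv' : flε v = f v - l + ε := by rw [hflε, max_eq_left (by linarith)]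
  have hw' : flε w = f w - l + ε := by rw [hflε, max_eq_left (by linarith)]
  have hsub : f v - f w = flε v - flε w := by rw [hv', hw']; ring
  rw [hsub]
  -- Both sides are symmetric under exchanging `v` and `w`.
  rcases le_total (flε w) (flε v) with h | h
  · exact rpow_concavity_of_le ζ _ _ hζ.1 hζ.2 (by linarith) h
  · have := rpow_concavity_of_le ζ _ _ hζ.1 hζ.2 (by linarith) h
    linear_combination this
end

section
/- Let f : ℝ^d → ℝ be nonnegative, l ≥ 0, ε > 0, ζ ∈ (0,1), and set f_{l,ε} := (f−l)_+ + ε. Then for all v, w ∈ ℝ^d with f(v) > l and f(w) > l, min{f_{l,ε}(v)^{−(1−ζ)}, f_{l,ε}(w)^{−(1−ζ)}} · |f(v) − f(w)| ≤ (2/ζ) · max{f_{l,ε}(v)^{ζ/2}, f_{l,ε}(w)^{ζ/2}} · |f_{l,ε}(v)^{ζ/2} − f_{l,ε}(w)^{ζ/2}|. -/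
/-!
On `{f > l}` the difference `f v - f w` equals `a - b` with `a = flε v`, `b = flε w`, both positive.
By symmetry let `b ≤ a`. Dividing by `a ^ ζ` and putting `t = b / a`, the claim becomes
`1 - t ≤ (2 / ζ) * (1 - t ^ (ζ / 2))`, which is Bernoulli's inequality
`(1 + x) ^ p ≤ 1 + p * x` for exponents `p ∈ [0, 1]`, with `p = ζ / 2` and `x = t - 1`.
-/

/-- The estimate for two ordered positive numbers, where the minimum and maximum are explicit. -/
lemma rpow_mul_sub_le_of_le {a b ζ : ℝ} (hb : 0 < b) (hba : b ≤ a) (hζ0 : 0 < ζ) (hζ1 : ζ < 1) :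
    a ^ (-(1 - ζ)) * (a - b) ≤ (2 / ζ) * a ^ (ζ / 2) * (a ^ (ζ / 2) - b ^ (ζ / 2)) := by
  have ha : 0 < a := hb.trans_le hba
  obtain ⟨t, ht, rfl⟩ : ∃ t, 0 < t ∧ b = a * t := ⟨b / a, by positivity, by field_simp⟩
  have bernoulli : t ^ (ζ / 2) ≤ 1 + ζ / 2 * (t - 1) := by
    have h := rpow_one_add_le_one_add_mul_self (s := t - 1) (p := ζ / 2)
      (by linarith) (by linarith) (by linarith)
    simpa using h
  have hleft : a ^ (-(1 - ζ)) * a = a ^ ζ := by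
    rw [← Real.rpow_add_one ha.ne']
    congr 1
    ring
  have hright : a ^ (ζ / 2) * a ^ (ζ / 2) = a ^ ζ := by
    rw [← Real.rpow_add ha]
    congr 1
    ring
  have key : 1 - t ≤ (2 / ζ) * (1 - t ^ (ζ / 2)) := by
    rw [div_mul_eq_mul_div, le_div_iff₀ hζ0]
    linarith
  rw [Real.mul_rpow ha.le ht.le]
  calc a ^ (-(1 - ζ)) * (a - a * t) = a ^ ζ * (1 - t) := by
        rw [← hleft]
        ring
    _ ≤ a ^ ζ * ((2 / ζ) * (1 - t ^ (ζ / 2))) := by gcongr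
    _ = (2 / ζ) * a ^ (ζ / 2) * (a ^ (ζ / 2) - a ^ (ζ / 2) * t ^ (ζ / 2)) := by
        rw [← hright]
        ring

/-- The estimate for two ordered positive numbers in the symmetric form with `min` and `max`. -/
lemma min_rpow_mul_abs_sub_le_of_le {a b ζ : ℝ} (hb : 0 < b) (hba : b ≤ a)
    (hζ0 : 0 < ζ) (hζ1 : ζ < 1) :
    min (a ^ (-(1 - ζ))) (b ^ (-(1 - ζ))) * |a - b| ≤
      (2 / ζ) * max (a ^ (ζ / 2)) (b ^ (ζ / 2)) * |a ^ (ζ / 2) - b ^ (ζ / 2)| := by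
  have hpow : b ^ (ζ / 2) ≤ a ^ (ζ / 2) := Real.rpow_le_rpow hb.le hba (by linarith)
  rw [max_eq_left hpow, abs_of_nonneg (sub_nonneg.2 hba), abs_of_nonneg (sub_nonneg.2 hpow)]
  exact (mul_le_mul_of_nonneg_right (min_le_left _ _) (sub_nonneg.2 hba)).trans
    (rpow_mul_sub_le_of_le hb hba hζ0 hζ1)

/-- **Preliminary estimate (Lemma 3.2.ii).**
Let `f : ℝ^d → ℝ` be nonnegative, `l ≥ 0`, `ε > 0`, `ζ ∈ (0,1)` and set
`f_{l,ε} := (f − l)₊ + ε`.  Then for all `v w` with `f v > l` and `f w > l`,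
`min{f_{l,ε}(v)^{−(1−ζ)}, f_{l,ε}(w)^{−(1−ζ)}} · |f v − f w|
  ≤ (2/ζ) · max{f_{l,ε}(v)^{ζ/2}, f_{l,ε}(w)^{ζ/2}} · |f_{l,ε}(v)^{ζ/2} − f_{l,ε}(w)^{ζ/2}|`. -/
theorem level_set_min_max_estimate
    (d : ℕ) (f : EuclideanSpace ℝ (Fin d) → ℝ) (hf : ∀ v, 0 ≤ f v)
    (l ε ζ : ℝ) (hl : 0 ≤ l) (hε : 0 < ε) (hζ : ζ ∈ Set.Ioo (0 : ℝ) 1)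
    (flε : EuclideanSpace ℝ (Fin d) → ℝ)
    (hflε : ∀ v, flε v = max (f v - l) 0 + ε)
    (v w : EuclideanSpace ℝ (Fin d)) (hv : l < f v) (hw : l < f w) :
    min (flε v ^ (-(1 - ζ))) (flε w ^ (-(1 - ζ))) * |f v - f w| ≤
      (2 / ζ) * max (flε v ^ (ζ / 2)) (flε w ^ (ζ / 2)) *
        |flε v ^ (ζ / 2) - flε w ^ (ζ / 2)| := by
  have hav : flε v = f v - l + ε := by rw [hflε, max_eq_left (by linarith)]
  have haw : flε w = f w - l + ε := by rw [hflε, max_eq_left (by linarith)]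
  have hdiff : f v - f w = flε v - flε w := by linarith
  have hposv : 0 < flε v := by linarith
  have hposw : 0 < flε w := by linarith
  rw [hdiff]
  rcases le_total (flε w) (flε v) with h | h
  · exact min_rpow_mul_abs_sub_le_of_le hposw h hζ.1 hζ.2
  · rw [min_comm, max_comm, abs_sub_comm, abs_sub_comm (flε v ^ (ζ / 2))]
    exact min_rpow_mul_abs_sub_le_of_le hposv h hζ.1 hζ.2
end

section
/- Let f : ℝ^d → ℝ be nonnegative, l ≥ 0, ε > 0, ζ ∈ (0,1), and set f_{l,ε} := (f−l)_+ + ε. Then for all v, w ∈ ℝ^d with f(v) > l and f(w) > l, min{(f−l)_+(v), (f−l)_+(w)} · |f_{l,ε}(v)^{−(1−ζ)} − f_{l,ε}(w)^{−(1−ζ)}| ≤ (2(1−ζ)/ζ) · |f_{l,ε}(v)^{ζ/2} − f_{l,ε}(w)^{ζ/2}| · min{f_{l,ε}(v)^{ζ/2}, f_{l,ε}(w)^{ζ/2}}. -/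
/-!
Put `a = f_{l,ε}(v)`, `b = f_{l,ε}(w)`; by symmetry `a ≤ b`, and since `min{(f-l)₊(v), (f-l)₊(w)} ≤ a`
it suffices to bound `a (a^{-(1-ζ)} - b^{-(1-ζ)})`. With `L = log b - log a`, the inequality
`1 + x ≤ exp x` bounds this from above by `a^ζ (1-ζ) L`, and bounds `b^{ζ/2} - a^{ζ/2}` from below by
`a^{ζ/2} (ζ/2) L`. The ratio of the two bounds is exactly `(2(1-ζ)/ζ) a^{ζ/2}`.
-/

/-- The tangent-line bound for the exponential, written for the power `b ^ p` around `a`. -/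
lemma rpow_mul_one_add_le {a b : ℝ} (ha : 0 < a) (hb : 0 < b) (p : ℝ) :
    a ^ p * (1 + p * (Real.log b - Real.log a)) ≤ b ^ p := by
  have h : b ^ p = a ^ p * Real.exp (p * (Real.log b - Real.log a)) := by
    rw [Real.rpow_def_of_pos ha, Real.rpow_def_of_pos hb, ← Real.exp_add]
    ring_nf
  rw [h]
  have := Real.add_one_le_exp (p * (Real.log b - Real.log a))
  exact mul_le_mul_of_nonneg_left (by linarith) (Real.rpow_pos_of_pos ha p).le

/-- The estimate for ordered positive numbers, with `m` in the role of the minimum of the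
truncations. -/
lemma ordered_inverse_power_estimate {a b m ζ : ℝ} (ha : 0 < a) (hab : a ≤ b) (hma : m ≤ a)
    (hζ : ζ ∈ Set.Ioo (0 : ℝ) 1) :
    m * |a ^ (-(1 - ζ)) - b ^ (-(1 - ζ))| ≤
      (2 * (1 - ζ) / ζ) * |a ^ (ζ / 2) - b ^ (ζ / 2)| * min (a ^ (ζ / 2)) (b ^ (ζ / 2)) := by
  obtain ⟨h0, h1⟩ := hζ
  have hb : 0 < b := ha.trans_le hab
  have hmono : a ^ (ζ / 2) ≤ b ^ (ζ / 2) := Real.rpow_le_rpow ha.le hab (by linarith)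
  have hanti : b ^ (-(1 - ζ)) ≤ a ^ (-(1 - ζ)) :=
    Real.rpow_le_rpow_of_nonpos ha hab (by linarith)
  rw [min_eq_left hmono, abs_of_nonneg (sub_nonneg.2 hanti), abs_sub_comm,
    abs_of_nonneg (sub_nonneg.2 hmono)]
  have e1 : a * a ^ (-(1 - ζ)) = a ^ ζ := by
    rw [← Real.rpow_one_add' ha.le (by linarith)]
    ring_nf
  have e2 : a ^ (ζ / 2) * a ^ (ζ / 2) = a ^ ζ := by
    rw [← Real.rpow_add ha]
    ring_nf
  have k1 := rpow_mul_one_add_le ha hb (-(1 - ζ))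
  have k2 := rpow_mul_one_add_le ha hb (ζ / 2)
  set L := Real.log b - Real.log a
  have hC : 0 ≤ 2 * (1 - ζ) / ζ := div_nonneg (by linarith) h0.le
  calc m * (a ^ (-(1 - ζ)) - b ^ (-(1 - ζ)))
      ≤ a * (a ^ (-(1 - ζ)) - b ^ (-(1 - ζ))) :=
        mul_le_mul_of_nonneg_right hma (sub_nonneg.2 hanti)
    _ ≤ a * (a ^ (-(1 - ζ)) * ((1 - ζ) * L)) :=
        mul_le_mul_of_nonneg_left (by linarith) ha.le
    _ = (2 * (1 - ζ) / ζ) * (a ^ (ζ / 2) * (ζ / 2 * L)) * a ^ (ζ / 2) := by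
        rw [← mul_assoc, e1, ← e2]
        field_simp
    _ ≤ (2 * (1 - ζ) / ζ) * (b ^ (ζ / 2) - a ^ (ζ / 2)) * a ^ (ζ / 2) := by
        refine mul_le_mul_of_nonneg_right (mul_le_mul_of_nonneg_left ?_ hC)
          (Real.rpow_pos_of_pos ha _).le
        linarith

/-- **Preliminary estimate (Lemma 3.2.iii).**
Let `f : ℝ^d → ℝ` be nonnegative, `l ≥ 0`, `ε > 0`, `ζ ∈ (0,1)` and set
`f_{l,ε} := (f − l)₊ + ε`.  Then for all `v w` with `f v > l` and `f w > l`,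
`min{(f−l)₊(v), (f−l)₊(w)} · |f_{l,ε}(v)^{−(1−ζ)} − f_{l,ε}(w)^{−(1−ζ)}|
  ≤ (2(1−ζ)/ζ) · |f_{l,ε}(v)^{ζ/2} − f_{l,ε}(w)^{ζ/2}| · min{f_{l,ε}(v)^{ζ/2}, f_{l,ε}(w)^{ζ/2}}`. -/
theorem level_set_inverse_power_estimate
    (d : ℕ) (f : EuclideanSpace ℝ (Fin d) → ℝ) (hf : ∀ v, 0 ≤ f v)
    (l ε ζ : ℝ) (hl : 0 ≤ l) (hε : 0 < ε) (hζ : ζ ∈ Set.Ioo (0 : ℝ) 1)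
    (flε : EuclideanSpace ℝ (Fin d) → ℝ)
    (hflε : ∀ v, flε v = max (f v - l) 0 + ε)
    (v w : EuclideanSpace ℝ (Fin d)) (hv : l < f v) (hw : l < f w) :
    min (max (f v - l) 0) (max (f w - l) 0) *
        |flε v ^ (-(1 - ζ)) - flε w ^ (-(1 - ζ))| ≤
      (2 * (1 - ζ) / ζ) * |flε v ^ (ζ / 2) - flε w ^ (ζ / 2)| *
        min (flε v ^ (ζ / 2)) (flε w ^ (ζ / 2)) := by
  have hpos : ∀ u, 0 < flε u := fun u => by
    rw [hflε]
    exact add_pos_of_nonneg_of_pos (le_max_right _ _) hε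
  have hle : ∀ u, max (f u - l) 0 ≤ flε u := fun u => by
    rw [hflε]
    linarith
  rcases le_total (flε v) (flε w) with h | h
  · exact ordered_inverse_power_estimate (hpos v) h ((min_le_left _ _).trans (hle v)) hζ
  · rw [abs_sub_comm, abs_sub_comm (flε v ^ (ζ / 2)), min_comm (flε v ^ (ζ / 2))]
    exact ordered_inverse_power_estimate (hpos w) h ((min_le_right _ _).trans (hle w)) hζ
end

section
/- Let d ≥ 2, s ∈ (0,1), γ ∈ (−d,1], q > d + 2s + γ, α ∈ (0,1], R > 0 and C₀ > 0. Let f : ℝ^d → [0,∞) be measurable and satisfy |f(a) − f(b)| ≤ C₀ |a−b|^α (1+|a|)^{−q} for all a, b ∈ ℝ^d. Then for all v, w ∈ B_R with v ≠ w, |K_f(v,w) − K_f(w,v)| ≤ C₀ (1+R)^q |v−w|^{α−(d+2s)} ∫_{{w' ⟂ v−w}} (1+|w'|)^{−q} |w'|^{γ+2s+1} dw', where the integral is over the (d−1)-dimensional hyperplane through the origin orthogonal to v−w, equipped with (d−1)-dimensional Lebesgue measure (and this integral is finite). -/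
/-!
The integrand of `K_f(v,w) - K_f(w,v)` is `(f (v + w') - f (w + w')) |w'|^(γ+2s+1)`, integrated over
one and the same hyperplane, since `v - w` and `w - v` span the same line
(`hyperplaneMeasure_sub_comm`).  The weighted Hölder bound controls it by
`C₀ |v-w|^α (1+|v+w'|)^(-q) |w'|^(γ+2s+1)`, and `1 + |w'| ≤ (1+R)(1+|v+w'|)` for `v ∈ B_R` moves the
weight from `v + w'` to `w'` at the cost of `(1+R)^q`.

Finiteness of the dominating integral follows by polar coordinates on a Euclidean space of dimension
`d - 1`: the radial integrand `r^(d-2) (1+r)^(-q) r^(γ+2s+1)` is integrable at `0` because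
`γ + 2s > -d` and at infinity because `q > d + 2s + γ`.

The hypotheses do not make `f` decay (it may be constant), so the two integrals defining the kernels
may diverge.  As their integrands differ by an integrable function, they are either both integrable,
or both non-integrable, in which case both Bochner integrals are zero and the bound is trivial.
-/

open MeasureTheory
noncomputable section

/-- The `(d−1)`-dimensional Lebesgue measure on the hyperplane through the origin
orthogonal to `u`, realised as a measure on `ℝ^d` supported on that hyperplane:
the pushforward of the Lebesgue measure on a Euclidean model of `(ℝ∙u)ᗮ` under a
linear isometry onto `(ℝ∙u)ᗮ ⊆ ℝ^d`. -/
def hyperplaneMeasure {d : ℕ} (u : EuclideanSpace ℝ (Fin d)) :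
    Measure (EuclideanSpace ℝ (Fin d)) :=
  Measure.map
    (fun y =>
      ((stdOrthonormalBasis ℝ
          ((ℝ ∙ u)ᗮ : Submodule ℝ (EuclideanSpace ℝ (Fin d)))).repr.symm y :
        EuclideanSpace ℝ (Fin d)))
    volume

/-- The Boltzmann kernel in Carleman form (universal constant normalised to `1`):
`K_f(v,w) = |v−w|^{−(d+2s)} ∫_{w' ⟂ v−w} f(v+w') |w'|^{γ+2s+1} dw'`. -/
def carlemanKernel {d : ℕ} (s γ : ℝ) (f : EuclideanSpace ℝ (Fin d) → ℝ)
    (v w : EuclideanSpace ℝ (Fin d)) : ℝ :=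
  ‖v - w‖ ^ (-((d : ℝ) + 2 * s)) *
    ∫ w', f (v + w') * ‖w'‖ ^ (γ + 2 * s + 1) ∂(hyperplaneMeasure (v - w))

theorem hyperplaneMeasure_sub_comm {d : ℕ} (v w : EuclideanSpace ℝ (Fin d)) :
    hyperplaneMeasure (w - v) = hyperplaneMeasure (v - w) := by
  have h : (ℝ ∙ (w - v)) = (ℝ ∙ (v - w)) := by
    rw [← neg_sub v w, ← Set.neg_singleton, Submodule.span_neg]
  exact congrArg (fun S : Submodule ℝ (EuclideanSpace ℝ (Fin d)) =>
    Measure.map (fun y => ((stdOrthonormalBasis ℝ (Sᗮ : Submodule ℝ _)).repr.symm y :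
      EuclideanSpace ℝ (Fin d))) volume) h

/-- The radial integral `∫₀^∞ r^(n-1) (1+r)^(-q) r^β dr` converges when `-n < β` and `n + β < q`. -/
theorem integrableOn_radial_weight (n : ℕ) (hn : 1 ≤ n) (q β : ℝ) (hq0 : 0 ≤ q)
    (hβ : -(n : ℝ) < β) (hq : n + β < q) :
    IntegrableOn (fun r : ℝ => r ^ (n - 1) • ((1 + r) ^ (-q) * r ^ β)) (Set.Ioi 0) := by
  have hmeas : Measurable fun r : ℝ => r ^ (n - 1) • ((1 + r) ^ (-q) * r ^ β) := by
    simp only [smul_eq_mul]; fun_prop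
  have hpow : ∀ r : ℝ, 0 < r → r ^ (n - 1) * r ^ β = r ^ ((n : ℝ) - 1 + β) := by
    intro r hr
    rw [Real.rpow_add hr, ← Real.rpow_natCast, Nat.cast_sub hn, Nat.cast_one]
  rw [← Set.Ioc_union_Ioi_eq_Ioi (zero_le_one (α := ℝ))]
  refine IntegrableOn.union ?_ ?_
  · have h0 : IntegrableOn (fun r : ℝ => r ^ ((n : ℝ) - 1 + β)) (Set.Ioc 0 1) :=
      (intervalIntegrable_iff_integrableOn_Ioc_of_le zero_le_one).1
        (intervalIntegral.intervalIntegrable_rpow' (by linarith))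
    refine h0.mono' hmeas.aestronglyMeasurable ?_
    refine (ae_restrict_mem measurableSet_Ioc).mono fun r hr => ?_
    have hr0 : 0 < r := hr.1
    rw [Real.norm_of_nonneg (by simp only [smul_eq_mul]; positivity), ← hpow r hr0, smul_eq_mul]
    have h1 : (1 + r) ^ (-q) ≤ 1 := Real.rpow_le_one_of_one_le_of_nonpos (by linarith) (neg_nonpos.2 hq0)
    gcongr
    exact mul_le_of_le_one_left (by positivity) h1
  · have h0 : IntegrableOn (fun r : ℝ => r ^ ((n : ℝ) - 1 + β - q)) (Set.Ioi 1) :=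
      integrableOn_Ioi_rpow_of_lt (by linarith) zero_lt_one
    refine h0.mono' hmeas.aestronglyMeasurable ?_
    refine (ae_restrict_mem measurableSet_Ioi).mono fun r hr => ?_
    have hr0 : 0 < r := zero_lt_one.trans hr
    rw [Real.norm_of_nonneg (by simp only [smul_eq_mul]; positivity), sub_eq_add_neg _ q,
      Real.rpow_add hr0, ← hpow r hr0, smul_eq_mul]
    have h1 : (1 + r) ^ (-q) ≤ r ^ (-q) :=
      Real.rpow_le_rpow_of_nonpos hr0 (by linarith) (neg_nonpos.2 hq0)
    calc r ^ (n - 1) * ((1 + r) ^ (-q) * r ^ β) ≤ r ^ (n - 1) * (r ^ (-q) * r ^ β) := by gcongr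
      _ = r ^ (n - 1) * r ^ β * r ^ (-q) := by ring

theorem integrable_weight_map_isometry {E : Type*} [NormedAddCommGroup E] [NormedSpace ℝ E]
    [MeasurableSpace E] [BorelSpace E] (n : ℕ) (hn : 1 ≤ n) (q β : ℝ) (hq0 : 0 ≤ q)
    (hβ : -(n : ℝ) < β) (hq : n + β < q) (L : EuclideanSpace ℝ (Fin n) →ₗᵢ[ℝ] E) :
    Integrable (fun x : E => (1 + ‖x‖) ^ (-q) * ‖x‖ ^ β) (Measure.map L volume) := by
  have hmeas : Measurable fun x : E => (1 + ‖x‖) ^ (-q) * ‖x‖ ^ β := by fun_prop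
  rw [integrable_map_measure hmeas.aestronglyMeasurable L.continuous.measurable.aemeasurable]
  simp only [Function.comp_def, LinearIsometry.norm_map]
  have : Nontrivial (EuclideanSpace ℝ (Fin n)) := by
    apply Module.nontrivial_of_finrank_pos (R := ℝ)
    rw [finrank_euclideanSpace_fin]; omega
  refine (integrable_fun_norm_addHaar volume
    (f := fun r : ℝ => (1 + r) ^ (-q) * r ^ β)).2 ?_
  rw [finrank_euclideanSpace_fin]
  exact integrableOn_radial_weight n hn q β hq0 hβ hq

theorem integrable_weight_hyperplane {d : ℕ} (hd : 2 ≤ d) (q β : ℝ) (hq0 : 0 ≤ q)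
    (hβ : -((d : ℝ) - 1) < β) (hq : (d : ℝ) - 1 + β < q)
    (u : EuclideanSpace ℝ (Fin d)) (hu : u ≠ 0) :
    Integrable (fun w' : EuclideanSpace ℝ (Fin d) => (1 + ‖w'‖) ^ (-q) * ‖w'‖ ^ β)
      (hyperplaneMeasure u) := by
  have hfin : Module.finrank ℝ ((ℝ ∙ u)ᗮ : Submodule ℝ (EuclideanSpace ℝ (Fin d))) = d - 1 := by
    have : Fact (Module.finrank ℝ (EuclideanSpace ℝ (Fin d)) = (d - 1) + 1) :=
      ⟨by rw [finrank_euclideanSpace_fin]; omega⟩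
    exact Submodule.finrank_orthogonal_span_singleton hu
  have hd1 : (Module.finrank ℝ ((ℝ ∙ u)ᗮ : Submodule ℝ (EuclideanSpace ℝ (Fin d))) : ℝ) =
      (d : ℝ) - 1 := by
    rw [hfin, Nat.cast_sub (by omega), Nat.cast_one]
  exact integrable_weight_map_isometry _ (by rw [hfin]; omega) q β hq0 (by rw [hd1]; exact hβ)
    (by rw [hd1]; exact hq)
    (((ℝ ∙ u)ᗮ : Submodule ℝ (EuclideanSpace ℝ (Fin d))).subtypeₗᵢ.comp
      (stdOrthonormalBasis ℝ
        ((ℝ ∙ u)ᗮ : Submodule ℝ (EuclideanSpace ℝ (Fin d)))).repr.symm.toLinearIsometry)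

/-- Moving the centre of the polynomial weight by a vector of norm less than `R`. -/
theorem weight_shift_le {E : Type*} [NormedAddCommGroup E] {q R : ℝ} (hq0 : 0 ≤ q)
    (v x : E) (hv : ‖v‖ < R) :
    (1 + ‖v + x‖) ^ (-q) ≤ (1 + R) ^ q * (1 + ‖x‖) ^ (-q) := by
  have hR : 0 < R := (norm_nonneg v).trans_lt hv
  have hx : ‖x‖ ≤ ‖v + x‖ + ‖v‖ := by
    simpa using norm_sub_le (v + x) v
  have h1 : (1 + ‖x‖) / (1 + R) ≤ 1 + ‖v + x‖ := by
    rw [div_le_iff₀ (by positivity)]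
    nlinarith [mul_nonneg hR.le (norm_nonneg (v + x))]
  calc (1 + ‖v + x‖) ^ (-q) ≤ ((1 + ‖x‖) / (1 + R)) ^ (-q) :=
        Real.rpow_le_rpow_of_nonpos (by positivity) h1 (neg_nonpos.2 hq0)
    _ = (1 + R) ^ q * (1 + ‖x‖) ^ (-q) := by
        rw [Real.div_rpow (by positivity) (by positivity), Real.rpow_neg (by positivity : 0 ≤ 1 + R),
          div_inv_eq_mul, mul_comm]

/-- No integrability of `g` or `h` is required: if `g - h` is integrable, then `g` and `h` are both
integrable or both non-integrable, and in the latter case both Bochner integrals are `0`. -/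
theorem abs_integral_sub_integral_le {X : Type*} [MeasurableSpace X] {μ : Measure X}
    {g h F : X → ℝ} (hg : Measurable g) (hh : Measurable h) (hF : Integrable F μ)
    (hbound : ∀ x, ‖g x - h x‖ ≤ F x) :
    |(∫ x, g x ∂μ) - ∫ x, h x ∂μ| ≤ ∫ x, F x ∂μ := by
  have hdiff : Integrable (fun x => g x - h x) μ :=
    hF.mono' (hg.sub hh).aestronglyMeasurable (Filter.Eventually.of_forall hbound)
  by_cases hhi : Integrable h μ
  · have hgi : Integrable g μ := by
      simpa [Pi.add_def] using hdiff.add hhi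
    rw [← integral_sub hgi hhi]
    exact norm_integral_le_of_norm_le hF (Filter.Eventually.of_forall hbound)
  · have hgi : ¬ Integrable g μ := by
      intro hgi
      apply hhi
      simpa [Pi.sub_def] using hgi.sub hdiff
    rw [integral_undef hhi, integral_undef hgi, sub_zero, abs_zero]
    exact integral_nonneg fun x => (norm_nonneg _).trans (hbound x)

/-- **Hölder continuity transfers to the anti-symmetric part of the Boltzmann
kernel.**  If `f` is nonnegative and satisfies the weighted Hölder bound
`|f(a) − f(b)| ≤ C₀|a−b|^α (1+|a|)^{−q}`, then for `v, w ∈ B_R`, `v ≠ w`,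
`|K_f(v,w) − K_f(w,v)| ≤ C₀ (1+R)^q |v−w|^{α−(d+2s)} ∫_{w'⟂v−w} (1+|w'|)^{−q}|w'|^{γ+2s+1} dw'`,
the hyperplane integral being finite. -/
theorem antisymmetric_kernel_pointwise_bound
    (d : ℕ) (hd : 2 ≤ d) (s γ q α R C₀ : ℝ)
    (hs : s ∈ Set.Ioo (0 : ℝ) 1) (hγ : γ ∈ Set.Ioc (-(d : ℝ)) 1)
    (hq : (d : ℝ) + 2 * s + γ < q) (hα : α ∈ Set.Ioc (0 : ℝ) 1)
    (hR : 0 < R) (hC₀ : 0 < C₀)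
    (f : EuclideanSpace ℝ (Fin d) → ℝ) (hfmeas : Measurable f)
    (hfnonneg : ∀ v, 0 ≤ f v)
    (hfhold : ∀ a b : EuclideanSpace ℝ (Fin d),
      |f a - f b| ≤ C₀ * ‖a - b‖ ^ α * (1 + ‖a‖) ^ (-q))
    (v w : EuclideanSpace ℝ (Fin d))
    (hv : v ∈ Metric.ball (0 : EuclideanSpace ℝ (Fin d)) R)
    (hw : w ∈ Metric.ball (0 : EuclideanSpace ℝ (Fin d)) R) (hvw : v ≠ w) :
    Integrable (fun w' : EuclideanSpace ℝ (Fin d) =>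
        (1 + ‖w'‖) ^ (-q) * ‖w'‖ ^ (γ + 2 * s + 1)) (hyperplaneMeasure (v - w)) ∧
    |carlemanKernel s γ f v w - carlemanKernel s γ f w v| ≤
      C₀ * (1 + R) ^ q * ‖v - w‖ ^ (α - ((d : ℝ) + 2 * s)) *
        ∫ w', (1 + ‖w'‖) ^ (-q) * ‖w'‖ ^ (γ + 2 * s + 1)
          ∂(hyperplaneMeasure (v - w)) := by
  obtain ⟨hs0, -⟩ := hs
  have hγd := hγ.1
  have hq0 : 0 ≤ q := by linarith
  have hu : v - w ≠ 0 := sub_ne_zero.2 hvw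
  have hupos : 0 < ‖v - w‖ := norm_pos_iff.2 hu
  have hI := integrable_weight_hyperplane hd q (γ + 2 * s + 1) hq0 (by linarith) (by linarith)
    (v - w) hu
  refine ⟨hI, ?_⟩
  unfold carlemanKernel
  rw [hyperplaneMeasure_sub_comm v w, norm_sub_rev w v]
  generalize hyperplaneMeasure (v - w) = μ at hI ⊢
  generalize γ + 2 * s + 1 = β at hI ⊢
  have hmeas : ∀ a : EuclideanSpace ℝ (Fin d), Measurable fun w' => f (a + w') * ‖w'‖ ^ β :=
    fun a => (hfmeas.comp (measurable_const_add a)).mul (by fun_prop)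
  have hbound : ∀ w' : EuclideanSpace ℝ (Fin d),
      ‖f (v + w') * ‖w'‖ ^ β - f (w + w') * ‖w'‖ ^ β‖ ≤
        C₀ * (1 + R) ^ q * ‖v - w‖ ^ α * ((1 + ‖w'‖) ^ (-q) * ‖w'‖ ^ β) := by
    intro w'
    have h1 := hfhold (v + w') (w + w')
    rw [add_sub_add_right_eq_sub] at h1
    have h2 := weight_shift_le hq0 v w' (mem_ball_zero_iff.1 hv)
    rw [← sub_mul, norm_mul, Real.norm_eq_abs, Real.norm_of_nonneg (by positivity)]
    calc |f (v + w') - f (w + w')| * ‖w'‖ ^ β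
        ≤ C₀ * ‖v - w‖ ^ α * ((1 + R) ^ q * (1 + ‖w'‖) ^ (-q)) * ‖w'‖ ^ β := by
          gcongr
          exact h1.trans (by gcongr)
      _ = _ := by ring
  have hkey := abs_integral_sub_integral_le (hmeas v) (hmeas w) (hI.const_mul _) hbound
  rw [integral_const_mul] at hkey
  rw [← mul_sub, abs_mul, abs_of_nonneg (by positivity), sub_eq_add_neg α, Real.rpow_add hupos]
  calc _ ≤ ‖v - w‖ ^ (-((d : ℝ) + 2 * s)) * (C₀ * (1 + R) ^ q * ‖v - w‖ ^ α *
        ∫ w', (1 + ‖w'‖) ^ (-q) * ‖w'‖ ^ β ∂μ) := by gcongr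
    _ = _ := by ring
end
end
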